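/- arXiv:2001.03778 — 2 statements merged into one kernel-verified Lean document; each statement's English description precedes it below -/
import Mathlib

section
/- Let 0 < α ≤ 1 and ν ∈ ℝ, and set h₀ := min{e^{−2ν/α}, 1/2}. Then there exists a constant C, depending only on α and ν, such that for all real h with 0 < h ≤ h₀ one has ∫₀^h s^{α−1} |ln s|^ν ds ≤ C · h^α · |ln h|^ν (the integral being a finite Lebesgue integral over (0,h) since α > 0). -/
/-!
Split `s ^ (α - 1) |log s| ^ ν` as `s ^ (α/2 - 1) · (s ^ (α/2) |log s| ^ ν)`. The second factor is
increasing in `s < 1` as long as `s ≤ exp (-2ν/α)`, so on `(0, h)` it is at most its value at `h`,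
and integrating the first factor contributes `(2/α) h ^ (α/2)`.
-/

open MeasureTheory Set

theorem antitoneOn_rpow_mul_exp_neg {δ : ℝ} (hδ : 0 ≤ δ) (ν : ℝ) :
    AntitoneOn (fun x : ℝ => x ^ ν * Real.exp (-(δ * x))) {x | 0 < x ∧ ν ≤ δ * x} := by
  rintro x ⟨hx, hνx⟩ y ⟨hy, -⟩ hxy
  have log_ratio_nonneg : 0 ≤ Real.log (y / x) := Real.log_nonneg ((one_le_div hx).2 hxy)
  have exponent_le : ν * Real.log (y / x) ≤ δ * (y - x) :=
    calc ν * Real.log (y / x) ≤ δ * x * Real.log (y / x) := by gcongr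
      _ ≤ δ * x * (y / x - 1) := by
          gcongr
          exact Real.log_le_sub_one_of_pos (div_pos hy hx)
      _ = δ * (y - x) := by field_simp
  rw [Real.log_div hy.ne' hx.ne'] at exponent_le
  simp only [Real.rpow_def_of_pos hx, Real.rpow_def_of_pos hy, ← Real.exp_add, Real.exp_le_exp]
  linarith

theorem monotoneOn_rpow_mul_abs_log_rpow {δ : ℝ} (hδ : 0 < δ) (ν : ℝ) :
    MonotoneOn (fun s : ℝ => s ^ δ * |Real.log s| ^ ν)
      (Ioo 0 1 ∩ Iic (Real.exp (-ν / δ))) := by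
  have eq_comp : EqOn ((fun x : ℝ => x ^ ν * Real.exp (-(δ * x))) ∘ fun s => -Real.log s)
      (fun s : ℝ => s ^ δ * |Real.log s| ^ ν) (Ioo 0 1 ∩ Iic (Real.exp (-ν / δ))) := by
    rintro s ⟨⟨hs0, hs1⟩, -⟩
    simp only [Function.comp_apply, abs_of_neg (Real.log_neg hs0 hs1), Real.rpow_def_of_pos hs0,
      mul_neg, neg_neg, mul_comm]
  refine ((antitoneOn_rpow_mul_exp_neg hδ.le ν).comp ?_ ?_).congr eq_comp
  · rintro s ⟨⟨hs0, -⟩, -⟩ t - hst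
    exact neg_le_neg (Real.log_le_log hs0 hst)
  · rintro s ⟨⟨hs0, hs1⟩, hs⟩
    have log_le : Real.log s ≤ -ν / δ := (Real.log_le_iff_le_exp hs0).2 hs
    rw [le_div_iff₀ hδ] at log_le
    exact ⟨neg_pos.2 (Real.log_neg hs0 hs1), by linarith⟩

theorem setIntegral_Ioo_rpow_sub_one {β h : ℝ} (hβ : 0 < β) (hh : 0 ≤ h) :
    ∫ s in Ioo 0 h, s ^ (β - 1) = h ^ β / β := by
  rw [← integral_Ioc_eq_integral_Ioo, ← intervalIntegral.integral_of_le hh,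
    integral_rpow (Or.inl (by linarith)), sub_add_cancel, Real.zero_rpow hβ.ne', sub_zero]

section BoundedFactor

variable {E : Type*} [NormedAddCommGroup E] [NormedSpace ℝ E] {g : ℝ → E} {β h M : ℝ}

theorem integrableOn_Ioo_rpow_sub_one_smul (hβ : 0 < β) (hh : 0 < h)
    (hg : AEStronglyMeasurable g (volume.restrict (Ioo 0 h)))
    (hgM : ∀ s ∈ Ioo 0 h, ‖g s‖ ≤ M) :
    IntegrableOn (fun s => s ^ (β - 1) • g s) (Ioo 0 h) :=
  ((intervalIntegral.integrableOn_Ioo_rpow_iff hh).2 (by linarith)).smul_bdd M hg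
    (ae_restrict_of_forall_mem measurableSet_Ioo hgM)

theorem norm_setIntegral_Ioo_rpow_sub_one_smul_le (hβ : 0 < β) (hh : 0 < h)
    (hgM : ∀ s ∈ Ioo 0 h, ‖g s‖ ≤ M) :
    ‖∫ s in Ioo 0 h, s ^ (β - 1) • g s‖ ≤ h ^ β / β * M := by
  have rpow_integrable : IntegrableOn (fun s : ℝ => s ^ (β - 1)) (Ioo 0 h) :=
    (intervalIntegral.integrableOn_Ioo_rpow_iff hh).2 (by linarith)
  rw [← setIntegral_Ioo_rpow_sub_one hβ hh.le, ← integral_mul_const]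
  refine norm_integral_le_of_norm_le (rpow_integrable.mul_const M)
    (ae_restrict_of_forall_mem measurableSet_Ioo fun s hs => ?_)
  have rpow_nonneg : 0 ≤ s ^ (β - 1) := Real.rpow_nonneg hs.1.le _
  rw [norm_smul, Real.norm_of_nonneg rpow_nonneg]
  exact mul_le_mul_of_nonneg_left (hgM s hs) rpow_nonneg

end BoundedFactor

theorem stmt_0_general {α h : ℝ} (ν : ℝ) (hα : 0 < α) (hh : 0 < h) (hh1 : h < 1)
    (hle : h ≤ Real.exp (-(2 * ν) / α)) :
    IntegrableOn (fun s => s ^ (α - 1) * |Real.log s| ^ ν) (Ioo 0 h) ∧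
      ∫ s in Ioo 0 h, s ^ (α - 1) * |Real.log s| ^ ν ≤
        2 / α * h ^ α * |Real.log h| ^ ν := by
  set g : ℝ → ℝ := fun s => s ^ (α / 2) * |Real.log s| ^ ν with hg
  have hle' : h ≤ Real.exp (-ν / (α / 2)) := by
    rwa [show -ν / (α / 2) = -(2 * ν) / α by field_simp]
  have eq_factored : EqOn (fun s => s ^ (α - 1) * |Real.log s| ^ ν)
      (fun s => s ^ (α / 2 - 1) • g s) (Ioo 0 h) := fun s hs => by
    simp only [hg, smul_eq_mul, ← mul_assoc, ← Real.rpow_add hs.1]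
    ring_nf
  have g_le : ∀ s ∈ Ioo 0 h, ‖g s‖ ≤ g h := fun s hs => by
    rw [Real.norm_of_nonneg (mul_nonneg (Real.rpow_nonneg hs.1.le _) (by positivity))]
    exact monotoneOn_rpow_mul_abs_log_rpow (half_pos hα) ν
      ⟨⟨hs.1, hs.2.trans hh1⟩, hs.2.le.trans hle'⟩ ⟨⟨hh, hh1⟩, hle'⟩ hs.2.le
  have g_measurable : Measurable g := by fun_prop
  refine ⟨(integrableOn_Ioo_rpow_sub_one_smul (half_pos hα) hh
    g_measurable.aestronglyMeasurable g_le).congr_fun eq_factored.symm measurableSet_Ioo, ?_⟩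
  calc ∫ s in Ioo 0 h, s ^ (α - 1) * |Real.log s| ^ ν
      = ∫ s in Ioo 0 h, s ^ (α / 2 - 1) • g s :=
        setIntegral_congr_fun measurableSet_Ioo eq_factored
    _ ≤ h ^ (α / 2) / (α / 2) * g h := (Real.le_norm_self _).trans
        (norm_setIntegral_Ioo_rpow_sub_one_smul_le (half_pos hα) hh g_le)
    _ = 2 / α * (h ^ (α / 2) * h ^ (α / 2)) * |Real.log h| ^ ν := by
        simp only [hg]
        field_simp
    _ = 2 / α * h ^ α * |Real.log h| ^ ν := by rw [← Real.rpow_add hh, add_halves]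

/-- For `0 < α ≤ 1` and `ν ∈ ℝ`, with `h₀ = min (exp (-2ν/α)) (1/2)`,
there is a constant `C` (depending only on `α, ν`) such that for all `0 < h ≤ h₀`,
`∫_{(0,h)} s^(α-1) |ln s|^ν ds ≤ C h^α |ln h|^ν`. -/
theorem stmt_0 (α ν : ℝ) (hα0 : 0 < α) (hα1 : α ≤ 1) :
    ∃ C : ℝ, ∀ h : ℝ, 0 < h → h ≤ min (Real.exp (-(2 * ν) / α)) (1 / 2) →
      (∫ s in Set.Ioo (0 : ℝ) h, s ^ (α - 1) * |Real.log s| ^ ν) ≤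
        C * h ^ α * |Real.log h| ^ ν := by
  refine ⟨2 / α, fun h hh hmin => ?_⟩
  obtain ⟨hle, hhalf⟩ := le_min_iff.1 hmin
  exact (stmt_0_general ν hα0 hh (hhalf.trans_lt one_half_lt_one) hle).2
end

section
/- Let 0 < α < 1 and ν ∈ ℝ, and set h₀ := min{e^{−2ν/α}, e^{2ν/(1−α)}, 1/2}. Then there exists a constant C, depending only on α and ν, such that for all real h with 0 < h ≤ h₀ one has ∫_h^{h₀} s^{α−2} |ln s|^ν ds ≤ C · h^{α−1} · |ln h|^ν. -/
/-!
The power `s ^ (α - 2)` splits as `s ^ ((α - 3) / 2) * s ^ (-b)` with `b = (1 - α) / 2 > 0`. The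
first factor is still integrable at infinity, and the second is strong enough to make
`s ^ (-b) * |log s| ^ ν` decreasing on `(0, 1) ∩ (0, exp (ν / b)]`: in the variable `L = -log s` it
is `exp (b * L + ν * log L)`, whose exponent has derivative `b + ν / L ≥ 0`. So this product may be
replaced by its value at the left endpoint `h`, and what remains is `∫_h^∞ s ^ ((α - 3) / 2) ds`.
-/

open Real Set MeasureTheory

theorem monotoneOn_mul_add_mul_log {b ν : ℝ} (hb : 0 ≤ b) :
    MonotoneOn (fun L ↦ b * L + ν * log L) {L | 0 < L ∧ -ν ≤ b * L} := by
  rintro L ⟨hL, hνL⟩ M ⟨hM, -⟩ hLM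
  have hlog : log L ≤ log M := log_le_log hL hLM
  rcases le_total 0 ν with hν | hν
  · dsimp only
    gcongr
  · have hsub : 0 ≤ M / L - 1 := sub_nonneg.2 ((one_le_div hL).2 hLM)
    have key : -ν * (log M - log L) ≤ b * M - b * L :=
      calc
        -ν * (log M - log L) = -ν * log (M / L) := by rw [log_div hM.ne' hL.ne']
        _ ≤ -ν * (M / L - 1) :=
          mul_le_mul_of_nonneg_left (log_le_sub_one_of_pos (div_pos hM hL)) (neg_nonneg.2 hν)
        _ ≤ b * L * (M / L - 1) := mul_le_mul_of_nonneg_right hνL hsub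
        _ = b * M - b * L := by field_simp
    dsimp only
    linarith

theorem rpow_neg_mul_abs_log_rpow_eq_exp {b ν s : ℝ} (hs : s ∈ Ioo 0 1) :
    s ^ (-b) * |log s| ^ ν = exp (b * -log s + ν * log (-log s)) := by
  have hlog : log s < 0 := log_neg hs.1 hs.2
  rw [abs_of_neg hlog, rpow_def_of_pos hs.1, rpow_def_of_pos (neg_pos.2 hlog), ← exp_add]
  ring_nf

theorem antitoneOn_rpow_neg_mul_abs_log_rpow {b ν : ℝ} (hb : 0 < b) :
    AntitoneOn (fun s ↦ s ^ (-b) * |log s| ^ ν) (Ioo 0 1 ∩ Iic (exp (ν / b))) := by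
  have mem_domain : ∀ s ∈ Ioo 0 1 ∩ Iic (exp (ν / b)),
      -log s ∈ {L | 0 < L ∧ -ν ≤ b * L} := by
    rintro s ⟨hs, hsexp⟩
    have hlog : log s * b ≤ ν := (le_div_iff₀ hb).1 ((log_le_iff_le_exp hs.1).2 hsexp)
    exact ⟨neg_pos.2 (log_neg hs.1 hs.2), by linarith⟩
  intro s hs t ht hst
  dsimp only
  rw [rpow_neg_mul_abs_log_rpow_eq_exp hs.1, rpow_neg_mul_abs_log_rpow_eq_exp ht.1]
  exact exp_le_exp.2 <| monotoneOn_mul_add_mul_log hb.le (mem_domain t ht) (mem_domain s hs)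
    (neg_le_neg (log_le_log hs.1.1 hst))

theorem norm_setIntegral_rpow_smul_le {E : Type*} [NormedAddCommGroup E] [NormedSpace ℝ E]
    {a c M : ℝ} {t : Set ℝ} {f : ℝ → E} (ha : a < -1) (hc : 0 < c) (ht : MeasurableSet t)
    (htc : t ⊆ Ioi c) (hM : 0 ≤ M) (hf : ∀ s ∈ t, ‖f s‖ ≤ M) :
    ‖∫ s in t, s ^ a • f s‖ ≤ -c ^ (a + 1) / (a + 1) * M := by
  have hint : IntegrableOn (fun s : ℝ ↦ s ^ a * M) (Ioi c) :=
    (integrableOn_Ioi_rpow_of_lt ha hc).mul_const M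
  have hrpow : ∀ s ∈ Ioi c, 0 ≤ s ^ a := fun s hs ↦ rpow_nonneg (hc.trans hs).le a
  calc
    ‖∫ s in t, s ^ a • f s‖ ≤ ∫ s in t, s ^ a * M := by
      refine norm_integral_le_of_norm_le (hint.mono_set htc) (ae_restrict_of_forall_mem ht ?_)
      intro s hs
      rw [norm_smul, norm_of_nonneg (hrpow s (htc hs))]
      exact mul_le_mul_of_nonneg_left (hf s hs) (hrpow s (htc hs))
    _ ≤ ∫ s in Ioi c, s ^ a * M :=
      setIntegral_mono_set hint
        (ae_restrict_of_forall_mem measurableSet_Ioi fun s hs ↦ mul_nonneg (hrpow s hs) hM)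
        htc.eventuallyLE
    _ = -c ^ (a + 1) / (a + 1) * M := by
      rw [integral_mul_const, integral_Ioi_rpow_of_lt ha hc]

theorem stmt_1_general {α ν h H : ℝ} (hα : α < 1) (hh : 0 < h) (hH : H ≤ 1)
    (hHexp : H ≤ exp (2 * ν / (1 - α))) :
    ∫ s in Ioo h H, s ^ (α - 2) * |log s| ^ ν ≤ 2 / (1 - α) * h ^ (α - 1) * |log h| ^ ν := by
  obtain ⟨b, rfl⟩ : ∃ b, α = 1 - 2 * b := ⟨(1 - α) / 2, by ring⟩
  have hb : 0 < b := by linarith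
  rw [show 2 * ν / (1 - (1 - 2 * b)) = ν / b by field_simp; ring] at hHexp
  have nonneg : ∀ s, 0 < s → 0 ≤ s ^ (-b) * |log s| ^ ν := fun s hs ↦ by positivity
  have le_left : ∀ s ∈ Ioo h H, ‖s ^ (-b) * |log s| ^ ν‖ ≤ h ^ (-b) * |log h| ^ ν := by
    rintro s ⟨hhs, hsH⟩
    rw [norm_of_nonneg (nonneg s (hh.trans hhs))]
    exact antitoneOn_rpow_neg_mul_abs_log_rpow hb
      ⟨⟨hh, (hhs.trans hsH).trans_le hH⟩, (hhs.trans hsH).le.trans hHexp⟩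
      ⟨⟨hh.trans hhs, hsH.trans_le hH⟩, hsH.le.trans hHexp⟩ hhs.le
  calc
    ∫ s in Ioo h H, s ^ (1 - 2 * b - 2) * |log s| ^ ν
        = ∫ s in Ioo h H, s ^ (-1 - b) • (s ^ (-b) * |log s| ^ ν) := by
      refine setIntegral_congr_fun measurableSet_Ioo fun s hs ↦ ?_
      rw [smul_eq_mul, ← mul_assoc, ← rpow_add (hh.trans hs.1)]
      ring_nf
    _ ≤ -h ^ (-1 - b + 1) / (-1 - b + 1) * (h ^ (-b) * |log h| ^ ν) :=
      (le_norm_self _).trans <| norm_setIntegral_rpow_smul_le (by linarith) hh measurableSet_Ioo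
        Ioo_subset_Ioi_self (nonneg h hh) le_left
    _ = 2 / (1 - (1 - 2 * b)) * h ^ (1 - 2 * b - 1) * |log h| ^ ν := by
      rw [show -1 - b + 1 = -b by ring, show 1 - 2 * b - 1 = -b + -b by ring, rpow_add hh,
        sub_sub_cancel]
      field_simp

/-- For `0 < α < 1` and `ν ∈ ℝ`, with
`h₀ = min (exp (-2ν/α)) (min (exp (2ν/(1-α))) (1/2))`, there is a constant `C`
(depending only on `α, ν`) such that for all `0 < h ≤ h₀`,
`∫_{(h,h₀)} s^(α-2) |ln s|^ν ds ≤ C h^(α-1) |ln h|^ν`. -/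
theorem stmt_1 (α ν : ℝ) (hα0 : 0 < α) (hα1 : α < 1) :
    ∃ C : ℝ, ∀ h : ℝ, 0 < h →
      h ≤ min (Real.exp (-(2 * ν) / α)) (min (Real.exp (2 * ν / (1 - α))) (1 / 2)) →
      (∫ s in Set.Ioo h
          (min (Real.exp (-(2 * ν) / α)) (min (Real.exp (2 * ν / (1 - α))) (1 / 2))),
        s ^ (α - 2) * |Real.log s| ^ ν) ≤ C * h ^ (α - 1) * |Real.log h| ^ ν := by
  refine ⟨2 / (1 - α), fun h hh _ ↦ stmt_1_general hα1 hh ?_ ?_⟩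
  · exact (min_le_right _ _).trans ((min_le_right _ _).trans (by norm_num))
  · exact (min_le_right _ _).trans (min_le_left _ _)
end
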